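/- Assume Hypothesis 3.1 and the setting of Lemma 3.3, with Ξ₊(λ), Ξ₋(λ) the spectral shift operators associated with Φ₊(z), Φ̃₋(z). Then for a.e. λ ∈ ℝ one has convergence in trace norm of the boundary values: lim_{ε↓0} ‖Ξ₊(λ) − π⁻¹ Im(log(Φ₊(λ + iε)))‖_{B₁(H₊)} = 0 and lim_{ε↓0} ‖Ξ₋(λ) + π⁻¹ Im(log(Φ̃₋(λ + iε)))‖_{B₁(H₋)} = 0. -/

import Mathlib

open Complex Filter MeasureTheory TopologicalSpace ContinuousLinearMap
open scoped InnerProductSpace Topology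

noncomputable section

namespace SpectralShift

variable {H : Type*} [NormedAddCommGroup H] [InnerProductSpace ℂ H] [CompleteSpace H]

/-- The imaginary part `(T - T*)/(2i)` of a bounded operator. -/
def imPart (T : H →L[ℂ] H) : H →L[ℂ] H :=
  ((2 * Complex.I)⁻¹ : ℂ) • (T - ContinuousLinearMap.adjoint T)

/-- An operator-valued Herglotz function: analytic on the open upper half-plane with
nonnegative imaginary part there. -/
def IsHerglotz (M : ℂ → H →L[ℂ] H) : Prop :=
  DifferentiableOn ℂ M {z : ℂ | 0 < z.im} ∧ ∀ z : ℂ, 0 < z.im → (imPart (M z)).IsPositive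

/-- The integrand `(T + iλ)⁻¹ - (1 + iλ)⁻¹ I` in the integral representation of `log T`. -/
def logIntegrand (T : H →L[ℂ] H) (t : ℝ) : H →L[ℂ] H :=
  Ring.inverse (T + ((t : ℂ) * Complex.I) • (1 : H →L[ℂ] H)) -
    (((1 : ℂ) + (t : ℂ) * Complex.I)⁻¹) • (1 : H →L[ℂ] H)

/-- `log T = -i ∫₀^∞ ((T + iλ)⁻¹ - (1 + iλ)⁻¹ I) dλ` as a norm-convergent improper
Riemann integral, for a dissipative boundedly invertible `T`. -/
def opLog (T : H →L[ℂ] H) : H →L[ℂ] H :=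
  limUnder atTop (fun R : ℝ => (-Complex.I) • ∫ t in (0:ℝ)..R, logIntegrand T t)

/-- The logarithm `log S = (log S*)*` of an operator `S` with `-S` dissipative. -/
def opLogAnti (T : H →L[ℂ] H) : H →L[ℂ] H :=
  ContinuousLinearMap.adjoint (opLog (ContinuousLinearMap.adjoint T))

/-- The logarithm of a Herglotz-type operator family on `ℂ ∖ ℝ`, using `log T` in the
upper half-plane and the convention `log S = (log S*)*` in the lower half-plane. -/
def logHerg (Φ : ℂ → H →L[ℂ] H) (z : ℂ) : H →L[ℂ] H :=
  if 0 < z.im then opLog (Φ z) else opLogAnti (Φ z)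

/-- The logarithm of an anti-Herglotz-type operator family on `ℂ ∖ ℝ` (nonpositive
imaginary part in the upper half-plane). -/
def logAntiHerg (Φ : ℂ → H →L[ℂ] H) (z : ℂ) : H →L[ℂ] H :=
  if 0 < z.im then opLogAnti (Φ z) else opLog (Φ z)

/-- Trace class: absolute summability of the diagonal in every Hilbert basis. -/
def IsTraceClass (T : H →L[ℂ] H) : Prop :=
  ∀ (w : Set H) (b : HilbertBasis w ℂ H), Summable fun i => ‖⟪(b i : H), T (b i)⟫_ℂ‖

/-- The trace, computed in a fixed Hilbert basis (basis-independent for trace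
class operators). -/
def trH (T : H →L[ℂ] H) : ℂ :=
  ∑' i, ⟪((exists_hilbertBasis ℂ H).choose_spec.choose i : H),
    T ((exists_hilbertBasis ℂ H).choose_spec.choose i)⟫_ℂ

/-- The trace norm, via duality with bounded operators (the correct value for trace
class operators). -/
def traceNorm (T : H →L[ℂ] H) : ℝ :=
  ⨆ B : {B : H →L[ℂ] H // ‖B‖ ≤ 1}, ‖trH (T * (B : H →L[ℂ] H))‖

/-- Hilbert-Schmidt operators. -/
def IsHilbertSchmidt (K : H →L[ℂ] H) : Prop :=
  ∀ (w : Set H) (b : HilbertBasis w ℂ H), Summable fun i => ‖K (b i)‖ ^ 2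

/-- A (possibly unbounded) self-adjoint operator in `H`: a densely defined symmetric
operator possessing everywhere-defined bounded resolvents at every non-real point. -/
structure SelfAdjointOp (H : Type*) [NormedAddCommGroup H] [InnerProductSpace ℂ H]
    [CompleteSpace H] where
  dom : Submodule ℂ H
  dense_dom : Dense (dom : Set H)
  op : dom →ₗ[ℂ] H
  symmetric : ∀ x y : dom, ⟪op x, (y : H)⟫_ℂ = ⟪(x : H), op y⟫_ℂ
  resolvent : ℂ → H →L[ℂ] H
  resolvent_mem : ∀ {z : ℂ}, z.im ≠ 0 → ∀ x : H, resolvent z x ∈ dom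
  op_resolvent : ∀ {z : ℂ} (hz : z.im ≠ 0) (x : H),
    op ⟨resolvent z x, resolvent_mem hz x⟩ - z • resolvent z x = x
  resolvent_op : ∀ {z : ℂ} (hz : z.im ≠ 0) (x : dom),
    resolvent z (op x - z • (x : H)) = x

/-- `B = A + V` for a bounded operator `V` (with `dom B = dom A`). -/
def IsSumOf (B A : SelfAdjointOp H) (V : H →L[ℂ] H) : Prop :=
  B.dom = A.dom ∧ ∀ (x : H) (hxB : x ∈ B.dom) (hxA : x ∈ A.dom),
    B.op ⟨x, hxB⟩ = A.op ⟨x, hxA⟩ + V x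

/-- `R` is the (bounded, everywhere defined) resolvent `(A - z)⁻¹` of `A` at `z`. -/
def SelfAdjointOp.IsResolventAt (A : SelfAdjointOp H) (z : ℂ) (R : H →L[ℂ] H) : Prop :=
  (∀ x : H, R x ∈ A.dom) ∧
  (∀ (x : H) (hx : R x ∈ A.dom), A.op ⟨R x, hx⟩ - z • R x = x) ∧
  (∀ x : A.dom, R (A.op x - z • (x : H)) = x)

/-- `E` is the projection-valued spectral measure of the self-adjoint operator `A`. -/
def IsSpectralMeasure (A : SelfAdjointOp H) (E : Set ℝ → H →L[ℂ] H) : Prop :=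
  (∀ B : Set ℝ, MeasurableSet B → IsSelfAdjoint (E B)) ∧
  (∀ B C : Set ℝ, MeasurableSet B → MeasurableSet C → E B * E C = E (B ∩ C)) ∧
  (E Set.univ = 1) ∧
  (∀ (f : ℕ → Set ℝ), (∀ n, MeasurableSet (f n)) → Pairwise (Function.onFun Disjoint f) →
    ∀ x : H, HasSum (fun n => E (f n) x) (E (⋃ n, f n) x)) ∧
  ∃ μ : H → Measure ℝ,
    (∀ (f : H) (B : Set ℝ), MeasurableSet B → μ f B = ENNReal.ofReal (⟪f, E B f⟫_ℂ).re) ∧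
    ∀ (z : ℂ), z.im ≠ 0 → ∀ f : H,
      ⟪f, A.resolvent z f⟫_ℂ = ∫ l : ℝ, ((l : ℂ) - z)⁻¹ ∂(μ f)

/-- Invertibility of `T` restricted to the range of the orthogonal projection `P`
(for `T` commuting with `P`), with inverse `S` supported in `ran P`. -/
def InvertibleOn (T P : H →L[ℂ] H) : Prop :=
  ∃ S : H →L[ℂ] H, S * P = S ∧ P * S = S ∧ S * (T * P) = P ∧ (P * T) * S = P

/-- The spectral projection `J₊ = (I + J)/2` onto `H₊` for a self-adjoint unitary `J`. -/
def Jplus (J : H →L[ℂ] H) : H →L[ℂ] H := ((2 : ℂ)⁻¹) • (1 + J)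

/-- The spectral projection `J₋ = (I - J)/2` onto `H₋` for a self-adjoint unitary `J`. -/
def Jminus (J : H →L[ℂ] H) : H →L[ℂ] H := ((2 : ℂ)⁻¹) • (1 - J)

/-- `Φ₊(z) = I + J₊ K* (H₀ - z)⁻¹ K J₊`, the operator on `H` inducing `Φ₊(z)` on `H₊`
(and the identity on `H₋`). -/
def PhiPlus (H0 : SelfAdjointOp H) (J K : H →L[ℂ] H) (z : ℂ) : H →L[ℂ] H :=
  1 + Jplus J * (ContinuousLinearMap.adjoint K * H0.resolvent z * K) * Jplus J

/-- `Φ̃₋(z) = I - J₋ K* (H₊ - z)⁻¹ K J₋`, the operator on `H` inducing `Φ̃₋(z)` on `H₋`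
(and the identity on `H₊`). -/
def PhiMinusT (Hp : SelfAdjointOp H) (J K : H →L[ℂ] H) (z : ℂ) : H →L[ℂ] H :=
  1 - Jminus J * (ContinuousLinearMap.adjoint K * Hp.resolvent z * K) * Jminus J


lemma parseval {ι : Type*} (b : HilbertBasis ι ℂ H) (x : H) :
    HasSum (fun i => ‖⟪b i, x⟫_ℂ‖ ^ 2) (‖x‖ ^ 2) := by
  have h := b.hasSum_inner_mul_inner x x
  have h2 := Complex.hasSum_re h
  convert h2 using 1
  · funext i
    rw [← inner_conj_symm x (b i), ← Complex.normSq_eq_conj_mul_self, Complex.ofReal_re,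
      Complex.normSq_eq_norm_sq]
  · rw [inner_self_eq_norm_sq_to_K]; norm_cast

lemma parseval_enorm {ι : Type*} (b : HilbertBasis ι ℂ H) (x : H) :
    ∑' i, ENNReal.ofReal (‖⟪b i, x⟫_ℂ‖ ^ 2) = ENNReal.ofReal (‖x‖ ^ 2) := by
  rw [← (parseval b x).tsum_eq, ENNReal.ofReal_tsum_of_nonneg (fun _ => by positivity)
    (parseval b x).summable]

lemma hs_adjoint_enorm {ι : Type*} (b : HilbertBasis ι ℂ H) (T : H →L[ℂ] H) :
    ∑' i, ENNReal.ofReal (‖adjoint T (b i)‖ ^ 2) = ∑' i, ENNReal.ofReal (‖T (b i)‖ ^ 2) := by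
  simp_rw [← parseval_enorm b (T _), ← parseval_enorm b (adjoint T _)]
  rw [ENNReal.tsum_comm]
  refine tsum_congr fun i => tsum_congr fun j => ?_
  rw [adjoint_inner_right, ← inner_conj_symm, RCLike.norm_conj]

lemma summable_of_tsum_ofReal {ι : Type*} {f : ι → ℝ} (hf : ∀ i, 0 ≤ f i) {c : ℝ} (hc : 0 ≤ c)
    (h : ∑' i, ENNReal.ofReal (f i) ≤ ENNReal.ofReal c) : Summable f ∧ ∑' i, f i ≤ c := by
  have hs : Summable f := by
    have h3 := ENNReal.summable_toReal (f := fun i => ENNReal.ofReal (f i))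
      (ne_top_of_le_ne_top ENNReal.ofReal_ne_top h)
    refine h3.congr fun i => ?_
    rw [ENNReal.toReal_ofReal (hf i)]
  refine ⟨hs, ?_⟩
  rw [← ENNReal.ofReal_tsum_of_nonneg hf hs] at h
  exact (ENNReal.ofReal_le_ofReal_iff hc).1 h

lemma hs_adjoint {ι : Type*} (b : HilbertBasis ι ℂ H) (T : H →L[ℂ] H)
    (h : Summable fun i => ‖T (b i)‖ ^ 2) :
    Summable (fun i => ‖adjoint T (b i)‖ ^ 2) ∧
      ∑' i, ‖adjoint T (b i)‖ ^ 2 ≤ ∑' i, ‖T (b i)‖ ^ 2 := by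
  refine summable_of_tsum_ofReal (fun _ => by positivity)
    (tsum_nonneg fun _ => by positivity) ?_
  rw [hs_adjoint_enorm, ENNReal.ofReal_tsum_of_nonneg (fun _ => by positivity) h]

lemma hs_mul {ι : Type*} (b : HilbertBasis ι ℂ H) (T B : H →L[ℂ] H)
    (h : Summable fun i => ‖T (b i)‖ ^ 2) :
    Summable (fun i => ‖(T * B) (b i)‖ ^ 2) ∧
      ∑' i, ‖(T * B) (b i)‖ ^ 2 ≤ ‖B‖ ^ 2 * ∑' i, ‖T (b i)‖ ^ 2 := by
  obtain ⟨h1, h2⟩ := hs_adjoint b T h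
  have h3 : ∀ i, ‖adjoint (T * B) (b i)‖ ^ 2 ≤ ‖B‖ ^ 2 * ‖adjoint T (b i)‖ ^ 2 := by
    intro i
    rw [← mul_pow]
    gcongr
    rw [← star_eq_adjoint, star_mul]
    refine (le_opNorm (star B) (star T (b i))).trans ?_
    rw [norm_star]; rfl
  have h4 : Summable fun i => ‖adjoint (T * B) (b i)‖ ^ 2 :=
    Summable.of_nonneg_of_le (fun _ => by positivity) h3 (h1.mul_left _)
  obtain ⟨h5, h6⟩ := hs_adjoint b _ h4
  rw [adjoint_adjoint] at h5 h6
  refine ⟨h5, h6.trans ((Summable.tsum_le_tsum h3 h4 (h1.mul_left _)).trans ?_)⟩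
  rw [tsum_mul_left]
  gcongr

lemma pos_sqrt {A : H →L[ℂ] H} (hA : A.IsPositive) :
    ∃ S : H →L[ℂ] H, (∀ x y, ⟪x, A y⟫_ℂ = ⟪S x, S y⟫_ℂ) := by
  have h0 : 0 ≤ A := (nonneg_iff_isPositive A).2 hA
  refine ⟨CFC.sqrt A, fun x y => ?_⟩
  have h1 := (nonneg_iff_isPositive _).1 (CFC.sqrt_nonneg A)
  conv_lhs => rw [← CFC.sqrt_mul_sqrt_self A h0]
  exact (h1.inner_left_eq_inner_right x _).symm

/-- diagonal entries -/
def dg {ι : Type*} (b : HilbertBasis ι ℂ H) (A : H →L[ℂ] H) (i : ι) : ℝ := (⟪b i, A (b i)⟫_ℂ).re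

lemma dg_nonneg {ι : Type*} (b : HilbertBasis ι ℂ H) {A : H →L[ℂ] H} (hA : A.IsPositive) (i : ι) :
    0 ≤ dg b A i := hA.re_inner_nonneg_right (b i)

lemma offdiag_le {ι : Type*} (b : HilbertBasis ι ℂ H) {A : H →L[ℂ] H} (hA : A.IsPositive)
    (i j : ι) : ‖⟪b i, A (b j)⟫_ℂ‖ ^ 2 ≤ dg b A i * dg b A j := by
  obtain ⟨S, hS⟩ := pos_sqrt hA
  have h : ∀ i, dg b A i = ‖S (b i)‖ ^ 2 := fun i => by
    rw [dg, hS, inner_self_eq_norm_sq_to_K]; norm_cast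
  rw [h, h, hS, ← mul_pow]
  gcongr
  exact norm_inner_le_norm _ _

lemma pos_mul_bound {ι : Type*} (b : HilbertBasis ι ℂ H) {A : H →L[ℂ] H} (hA : A.IsPositive)
    (hs : Summable (dg b A)) (B : H →L[ℂ] H) (hB : ‖B‖ ≤ 1) :
    Summable (fun i => ‖⟪b i, (A * B) (b i)⟫_ℂ‖) ∧
    ∀ (F : Finset ι) (t : ℝ), 0 < t → ∑' i : {i // i ∉ F}, ‖⟪b i, (A * B) (b i)⟫_ℂ‖ ≤
      t * ∑' i : {i // i ∉ F}, dg b A i + t⁻¹ * ∑' i, dg b A i := by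
  obtain ⟨S, hS⟩ := pos_sqrt hA
  have h : ∀ i, dg b A i = ‖S (b i)‖ ^ 2 := fun i => by
    rw [dg, hS, inner_self_eq_norm_sq_to_K]; norm_cast
  have hs' : Summable fun i => ‖S (b i)‖ ^ 2 := hs.congr h
  obtain ⟨h1, h2⟩ := hs_mul b S B hs'
  have h2' : ∑' i, ‖(S * B) (b i)‖ ^ 2 ≤ ∑' i, dg b A i := by
    refine h2.trans ?_
    rw [tsum_congr h]
    refine mul_le_of_le_one_left (tsum_nonneg fun _ => by positivity) ?_
    exact pow_le_one₀ (norm_nonneg _) hB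
  have key : ∀ t : ℝ, 0 < t → ∀ i, ‖⟪b i, (A * B) (b i)⟫_ℂ‖ ≤
      t * dg b A i + t⁻¹ * ‖(S * B) (b i)‖ ^ 2 := by
    intro t ht i
    have : ⟪b i, (A * B) (b i)⟫_ℂ = ⟪S (b i), (S * B) (b i)⟫_ℂ := hS _ _
    rw [this, h]
    refine (norm_inner_le_norm _ _).trans ?_
    set x := ‖S (b i)‖
    set y := ‖(S * B) (b i)‖
    have hx : 0 ≤ x := norm_nonneg _
    have hy : 0 ≤ y := norm_nonneg _
    have e : t * x ^ 2 + t⁻¹ * y ^ 2 - x * y = t⁻¹ * ((t * x - y) ^ 2 + t * x * y) := by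
      field_simp; ring
    have : 0 ≤ t⁻¹ * ((t * x - y) ^ 2 + t * x * y) := by positivity
    linarith
  have hsum : Summable (fun i => ‖⟪b i, (A * B) (b i)⟫_ℂ‖) := by
    refine Summable.of_nonneg_of_le (fun _ => norm_nonneg _) (key 1 one_pos) ?_
    exact (hs.mul_left _).add (h1.mul_left _)
  refine ⟨hsum, fun F t ht => ?_⟩
  have hsF : Summable fun i : {i // i ∉ F} => dg b A i := hs.subtype _
  have h1F : Summable fun i : {i // i ∉ F} => ‖(S * B) (b i)‖ ^ 2 := h1.subtype {i | i ∉ F}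
  have hsumF : Summable fun i : {i // i ∉ F} => ‖⟪b i, (A * B) (b i)⟫_ℂ‖ :=
    hsum.subtype {i | i ∉ F}
  refine (Summable.tsum_le_tsum (fun i : {i // i ∉ F} => key t ht i) hsumF
    ((hsF.mul_left _).add (h1F.mul_left _))).trans ?_
  rw [(hsF.mul_left _).tsum_add (h1F.mul_left _), tsum_mul_left, tsum_mul_left]
  gcongr
  exact (Summable.tsum_subtype_le (fun i => ‖(S * B) (b i)‖ ^ 2) {i | i ∉ F}
    (fun _ => by positivity) h1).trans h2'

lemma tail_small {ι α : Type*} {l : Filter α} {a : ι → ℝ} {f : α → ι → ℝ}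
    (hs : Summable a) (hfs : ∀ᶠ e in l, Summable (f e))
    (ht : Tendsto (fun e => ∑' i, f e i) l (𝓝 (∑' i, a i)))
    (hp : ∀ i, Tendsto (fun e => f e i) l (𝓝 (a i))) {η : ℝ} (hη : 0 < η) :
    ∃ F : Finset ι, ∑' i : {i // i ∉ F}, a i < η ∧
      ∀ᶠ e in l, ∑' i : {i // i ∉ F}, f e i < η := by
  obtain ⟨F, hF⟩ := ((tendsto_order.1 hs.hasSum).1 (∑' i, a i - η) (by linarith)).exists
  have e1 := hs.sum_add_tsum_subtype_compl F
  refine ⟨F, by linarith, ?_⟩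
  have h1 : Tendsto (fun e => ∑' i, f e i - ∑ i ∈ F, f e i) l
      (𝓝 (∑' i, a i - ∑ i ∈ F, a i)) := ht.sub (tendsto_finsetSum _ fun i _ => hp i)
  have h2 := (tendsto_order.1 h1).2 η (by linarith)
  filter_upwards [h2, hfs] with e h2 h3
  have e2 := h3.sum_add_tsum_subtype_compl F
  linarith

lemma strong_conv {ι α : Type*} {l : Filter α} (b : HilbertBasis ι ℂ H) {A : H →L[ℂ] H}
    {A' : α → H →L[ℂ] H} (hA : A.IsPositive) (hA' : ∀ᶠ e in l, (A' e).IsPositive)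
    (hs : Summable (dg b A)) (hs' : ∀ᶠ e in l, Summable (dg b (A' e)))
    (ht : Tendsto (fun e => ∑' i, dg b (A' e) i) l (𝓝 (∑' i, dg b A i)))
    (hw : ∀ i j, Tendsto (fun e => ⟪b i, A' e (b j)⟫_ℂ) l (𝓝 ⟪b i, A (b j)⟫_ℂ)) (j : ι) :
    Tendsto (fun e => ‖(A - A' e) (b j)‖) l (𝓝 0) := by
  have hd : ∀ i, Tendsto (fun e => dg b (A' e) i) l (𝓝 (dg b A i)) := fun i =>
    (Complex.continuous_re.tendsto _).comp (hw i i)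
  have hsq : Tendsto (fun e => ‖(A - A' e) (b j)‖ ^ 2) l (𝓝 0) := by
    rw [tendsto_order]
    refine ⟨fun c hc => Eventually.of_forall fun e => hc.trans_le (by positivity), fun c hc => ?_⟩
    set M : ℝ := dg b A j + 1 with hM
    have hM0 : 0 < M := by have := dg_nonneg b hA j; positivity
    obtain ⟨F, hF1, hF2⟩ := tail_small hs hs' ht hd (η := c / (8 * M)) (by positivity)
    have h1 : Tendsto (fun e => ∑ i ∈ F, ‖⟪b i, A (b j)⟫_ℂ - ⟪b i, A' e (b j)⟫_ℂ‖ ^ 2) l (𝓝 0) := by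
      have : (0:ℝ) = ∑ i ∈ F, ‖⟪b i, A (b j)⟫_ℂ - ⟪b i, A (b j)⟫_ℂ‖ ^ 2 := by simp
      rw [this]
      exact tendsto_finsetSum _ fun i _ => ((tendsto_const_nhds.sub (hw i j)).norm).pow 2
    filter_upwards [hA', hs', hF2, (tendsto_order.1 h1).2 (c / 2) (by positivity),
      (tendsto_order.1 (hd j)).2 M (by linarith)] with e k1 k2 k3 k4 k5
    have P := parseval b ((A - A' e) (b j))
    have e1 := P.summable.sum_add_tsum_subtype_compl F
    rw [P.tsum_eq] at e1
    have e2 : ∑ i ∈ F, ‖⟪b i, (A - A' e) (b j)⟫_ℂ‖ ^ 2 < c / 2 := by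
      simpa only [sub_apply, inner_sub_right] using k4
    have q1 : Summable fun i : {i // i ∉ F} => dg b A i := hs.subtype _
    have q2 : Summable fun i : {i // i ∉ F} => dg b (A' e) i := k2.subtype _
    have e3 : ∑' i : {i // i ∉ F}, ‖⟪b i, (A - A' e) (b j)⟫_ℂ‖ ^ 2 ≤
        ∑' i : {i // i ∉ F}, (2 * M * dg b A i + 2 * M * dg b (A' e) i) := by
      refine Summable.tsum_le_tsum (fun i => ?_) (P.summable.subtype {i | i ∉ F})
        ((q1.mul_left _).add (q2.mul_left _))
      have o1 := offdiag_le b hA i j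
      have o2 := offdiag_le b k1 i j
      have n1 := dg_nonneg b hA i
      have n2 := dg_nonneg b k1 i
      have o3 : ‖⟪b i, A (b j)⟫_ℂ‖ ^ 2 ≤ dg b A i * M := o1.trans (by gcongr; linarith)
      have o4 : ‖⟪b i, A' e (b j)⟫_ℂ‖ ^ 2 ≤ dg b (A' e) i * M := o2.trans (by gcongr)
      rw [sub_apply, inner_sub_right]
      have := norm_sub_le ⟪b i, A (b j)⟫_ℂ ⟪b i, A' e (b j)⟫_ℂ
      have h5 : ‖⟪b i, A (b j)⟫_ℂ - ⟪b i, A' e (b j)⟫_ℂ‖ ^ 2 ≤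
        (‖⟪b i, A (b j)⟫_ℂ‖ + ‖⟪b i, A' e (b j)⟫_ℂ‖) ^ 2 := by gcongr
      nlinarith [sq_nonneg (‖⟪b i, A (b j)⟫_ℂ‖ - ‖⟪b i, A' e (b j)⟫_ℂ‖)]
    rw [(q1.mul_left _).tsum_add (q2.mul_left _), tsum_mul_left, tsum_mul_left] at e3
    have e4 : 2 * M * ∑' i : {i // i ∉ F}, dg b A i < 2 * M * (c / (8 * M)) := by gcongr
    have e5 : 2 * M * ∑' i : {i // i ∉ F}, dg b (A' e) i < 2 * M * (c / (8 * M)) := by gcongr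
    have e6 : 2 * M * (c / (8 * M)) = c / 4 := by field_simp; ring
    linarith
  have := hsq.sqrt
  simpa [Real.sqrt_sq] using this

lemma gruemm {α : Type*} {l : Filter α} {A : H →L[ℂ] H}
    {A' : α → H →L[ℂ] H} (hA : A.IsPositive) (hA' : ∀ᶠ e in l, (A' e).IsPositive)
    (b : HilbertBasis _ ℂ H) (hb : b = (exists_hilbertBasis ℂ H).choose_spec.choose)
    (hs : Summable (dg b A)) (hs' : ∀ᶠ e in l, Summable (dg b (A' e)))
    (ht : Tendsto (fun e => ∑' i, dg b (A' e) i) l (𝓝 (∑' i, dg b A i)))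
    (hw : ∀ i j, Tendsto (fun e => ⟪b i, A' e (b j)⟫_ℂ) l (𝓝 ⟪b i, A (b j)⟫_ℂ)) :
    Tendsto (fun e => traceNorm (A - A' e)) l (𝓝 0) := by
  have hd : ∀ i, Tendsto (fun e => dg b (A' e) i) l (𝓝 (dg b A i)) := fun i =>
    (Complex.continuous_re.tendsto _).comp (hw i i)
  have hstr := strong_conv b hA hA' hs hs' ht hw
  rw [tendsto_order]
  refine ⟨fun c hc => Eventually.of_forall fun e => hc.trans_le
    (Real.iSup_nonneg fun _ => norm_nonneg _), fun c hc => ?_⟩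
  set M : ℝ := ∑' i, dg b A i + 1 with hM
  have hM0 : 0 < M := by
    have : 0 ≤ ∑' i, dg b A i := tsum_nonneg (dg_nonneg b hA)
    positivity
  set t : ℝ := 8 * M / c with ht'
  have ht0 : 0 < t := by positivity
  obtain ⟨F, hF1, hF2⟩ := tail_small hs hs' ht hd (η := c / (8 * t)) (by positivity)
  have h1 : Tendsto (fun e => ∑ i ∈ F, ‖(A - A' e) (b i)‖) l (𝓝 0) := by
    have : (0:ℝ) = ∑ i ∈ F, 0 := by simp
    rw [this]
    exact tendsto_finsetSum _ fun i _ => hstr i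
  filter_upwards [hA', hs', hF2, (tendsto_order.1 h1).2 (c / 4) (by positivity),
      (tendsto_order.1 ht).2 M (by linarith)] with e k1 k2 k3 k4 k5
  have hsa : IsSelfAdjoint (A - A' e) := hA.isSelfAdjoint.sub k1.isSelfAdjoint
  have : traceNorm (A - A' e) ≤ 3 * c / 4 := by
    have : Nonempty {B : H →L[ℂ] H // ‖B‖ ≤ 1} := ⟨⟨0, by simp⟩⟩
    refine ciSup_le fun ⟨B, hB⟩ => ?_
    obtain ⟨s1, b1⟩ := pos_mul_bound b hA hs B hB
    obtain ⟨s2, b2⟩ := pos_mul_bound b k1 k2 B hB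
    have hle : ∀ i, ‖⟪b i, ((A - A' e) * B) (b i)⟫_ℂ‖ ≤ ‖⟪b i, (A * B) (b i)⟫_ℂ‖ +
        ‖⟪b i, (A' e * B) (b i)⟫_ℂ‖ := by
      intro i
      rw [sub_mul, sub_apply, inner_sub_right]
      exact norm_sub_le _ _
    have hsm : Summable fun i => ‖⟪b i, ((A - A' e) * B) (b i)⟫_ℂ‖ :=
      Summable.of_nonneg_of_le (fun _ => norm_nonneg _) hle (s1.add s2)
    simp only [trH]
    rw [← hb]
    refine (norm_tsum_le_tsum_norm hsm).trans ?_
    rw [← hsm.sum_add_tsum_subtype_compl F]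
    have q1 : ∑ i ∈ F, ‖⟪b i, ((A - A' e) * B) (b i)⟫_ℂ‖ ≤ c / 4 := by
      refine le_trans (Finset.sum_le_sum fun i _ => ?_) k4.le
      have : ⟪b i, ((A - A' e) * B) (b i)⟫_ℂ = ⟪(A - A' e) (b i), B (b i)⟫_ℂ := by
        change ⟪b i, (A - A' e) (B (b i))⟫_ℂ = _
        rw [← adjoint_inner_left, hsa.adjoint_eq]
      rw [this]
      refine (norm_inner_le_norm _ _).trans ?_
      refine mul_le_of_le_one_right (norm_nonneg _) ((le_opNorm _ _).trans ?_)
      rw [b.orthonormal.1 i, mul_one]; exact hB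
    have q2 : ∑' i : {i // i ∉ F}, ‖⟪b i, ((A - A' e) * B) (b i)⟫_ℂ‖ ≤
        ∑' i : {i // i ∉ F}, ‖⟪b i, (A * B) (b i)⟫_ℂ‖ +
        ∑' i : {i // i ∉ F}, ‖⟪b i, (A' e * B) (b i)⟫_ℂ‖ := by
      have r0 : Summable fun i : {i // i ∉ F} => ‖⟪b i, ((A - A' e) * B) (b i)⟫_ℂ‖ :=
        hsm.subtype {i | i ∉ F}
      have r1 : Summable fun i : {i // i ∉ F} => ‖⟪b i, (A * B) (b i)⟫_ℂ‖ :=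
        s1.subtype {i | i ∉ F}
      have r2 : Summable fun i : {i // i ∉ F} => ‖⟪b i, (A' e * B) (b i)⟫_ℂ‖ :=
        s2.subtype {i | i ∉ F}
      refine (Summable.tsum_le_tsum (fun i : {i // i ∉ F} => hle i) r0
        (r1.add r2)).trans ?_
      exact (r1.tsum_add r2).le
    have q3 := b1 F t ht0
    have q4 := b2 F t ht0
    have e1 : t * ∑' i : {i // i ∉ F}, dg b A i ≤ t * (c / (8 * t)) := by gcongr
    have e2 : t * ∑' i : {i // i ∉ F}, dg b (A' e) i ≤ t * (c / (8 * t)) := by gcongr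
    have e3 : t * (c / (8 * t)) = c / 8 := by field_simp
    have e4 : t⁻¹ * ∑' i, dg b A i ≤ t⁻¹ * M := by gcongr; linarith
    have e5 : t⁻¹ * ∑' i, dg b (A' e) i ≤ t⁻¹ * M := by gcongr
    have e6 : t⁻¹ * M = c / 8 := by rw [ht']; field_simp
    linarith
  linarith

/-- Poisson kernel without the factor `π⁻¹`. -/
def pk (ε x : ℝ) : ℝ := ε / (x ^ 2 + ε ^ 2)

lemma pk_nonneg {ε : ℝ} (hε : 0 < ε) (x : ℝ) : 0 ≤ pk ε x := by unfold pk; positivity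

lemma pk_le {ε : ℝ} (hε : 0 < ε) (x : ℝ) : pk ε x ≤ ε⁻¹ := by
  unfold pk
  rw [div_le_iff₀ (by positivity)]
  have : ε⁻¹ * (x ^ 2 + ε ^ 2) = ε⁻¹ * x ^ 2 + ε := by field_simp
  rw [this]
  have : 0 ≤ ε⁻¹ * x ^ 2 := by positivity
  linarith

lemma pk_eq {ε : ℝ} (hε : 0 < ε) (x : ℝ) : pk ε x = ε⁻¹ * (1 + (x / ε) ^ 2)⁻¹ := by
  unfold pk
  field_simp
  ring

lemma pk_cont {ε : ℝ} (hε : 0 < ε) : Continuous (pk ε) := by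
  unfold pk
  exact Continuous.div (by fun_prop) (by fun_prop) (fun x => by positivity)

lemma pk_integrable {ε : ℝ} (hε : 0 < ε) (x0 : ℝ) : Integrable fun y => pk ε (y - x0) := by
  simp_rw [pk_eq hε]
  exact ((integrable_inv_one_add_sq.comp_div hε.ne').comp_sub_right x0).const_mul ε⁻¹

lemma pk_integral {ε : ℝ} (hε : 0 < ε) (x0 : ℝ) : ∫ y, pk ε (y - x0) = Real.pi := by
  rw [integral_sub_right_eq_self (fun y => pk ε y) x0]
  simp_rw [pk_eq hε]
  rw [integral_const_mul, Measure.integral_comp_div (fun x => (1 + x ^ 2)⁻¹) ε,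
    integral_univ_inv_one_add_sq, abs_of_pos hε, smul_eq_mul]
  field_simp

/-- layer-cake density -/
def kd (s : ℝ) : ℝ := 2 * s / (1 + s ^ 2) ^ 2

lemma kd_cont : Continuous kd := by
  unfold kd
  exact Continuous.div (by fun_prop) (by fun_prop) (fun x => by positivity)

lemma kd_lintegral {a : ℝ} (ha : 0 ≤ a) :
    ∫⁻ s in Set.Ioi a, ENNReal.ofReal (kd s) = ENNReal.ofReal (1 + a ^ 2)⁻¹ := by
  have hder : ∀ x ∈ Set.Ici a, HasDerivAt (fun s : ℝ => -(1 + s ^ 2)⁻¹) (kd x) x := by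
    intro x _
    have h1 : HasDerivAt (fun s : ℝ => 1 + s ^ 2) (2 * x) x := by
      simpa using (hasDerivAt_pow 2 x).const_add 1
    have h2 := (h1.inv (by positivity)).neg
    have e : kd x = -(-(2 * x) / (1 + x ^ 2) ^ 2) := by unfold kd; ring
    rw [e]
    exact h2
  have hpos : ∀ x ∈ Set.Ioi a, 0 ≤ kd x := by
    intro x hx
    have : 0 ≤ x := ha.trans (le_of_lt hx)
    unfold kd; positivity
  have hlim : Tendsto (fun s : ℝ => -(1 + s ^ 2)⁻¹) atTop (𝓝 0) := by
    have : Tendsto (fun s : ℝ => (1 + s ^ 2)⁻¹) atTop (𝓝 0) :=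
      tendsto_inv_atTop_zero.comp
        (tendsto_atTop_add_const_left _ _ (tendsto_pow_atTop (by norm_num)))
    simpa using this.neg
  have hint := integrableOn_Ioi_deriv_of_nonneg' hder hpos hlim
  rw [← ofReal_integral_eq_lintegral_ofReal hint
    ((ae_restrict_iff' measurableSet_Ioi).2 (Eventually.of_forall hpos)),
    integral_Ioi_of_hasDerivAt_of_nonneg' hder hpos hlim]
  simp

lemma layer {ε : ℝ} (hε : 0 < ε) (x0 : ℝ) {g : ℝ → ENNReal} (hg : Measurable g) :
    ∫⁻ y, ENNReal.ofReal (pk ε (y - x0)) * g y =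
      ∫⁻ s in Set.Ioi 0, ENNReal.ofReal (kd s) * (ENNReal.ofReal ε⁻¹ *
        ∫⁻ y in Metric.closedBall x0 (ε * s), g y) := by
  set S : Set (ℝ × ℝ) := {p | dist p.1 x0 ≤ ε * p.2} with hS
  have hSm : MeasurableSet S := measurableSet_le (by fun_prop) (by fun_prop)
  have hkm : Measurable fun s => ENNReal.ofReal (kd s) := kd_cont.measurable.ennreal_ofReal
  have e1 : ∀ y, ENNReal.ofReal (pk ε (y - x0)) * g y =
      ∫⁻ s in Set.Ioi 0, S.indicator (fun p => ENNReal.ofReal (kd p.2) *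
        (ENNReal.ofReal ε⁻¹ * g p.1)) (y, s) := by
    intro y
    have : ∀ s, S.indicator (fun p => ENNReal.ofReal (kd p.2) *
        (ENNReal.ofReal ε⁻¹ * g p.1)) (y, s) =
        (Set.Ici (dist y x0 / ε)).indicator (fun s => ENNReal.ofReal (kd s)) s *
          (ENNReal.ofReal ε⁻¹ * g y) := by
      intro s
      by_cases h : dist y x0 ≤ ε * s
      · have h' : s ∈ Set.Ici (dist y x0 / ε) := by
          simp only [Set.mem_Ici]; rw [div_le_iff₀ hε]; linarith
        rw [Set.indicator_of_mem (show (y, s) ∈ S from h), Set.indicator_of_mem h']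
      · have h' : s ∉ Set.Ici (dist y x0 / ε) := by
          simp only [Set.mem_Ici]; rw [div_le_iff₀ hε]; linarith
        rw [Set.indicator_of_notMem (show (y, s) ∉ S from h), Set.indicator_of_notMem h', zero_mul]
    simp_rw [this]
    rw [lintegral_mul_const _ (hkm.indicator measurableSet_Ici),
      setLIntegral_indicator measurableSet_Ici]
    have hae : (Set.Ici (dist y x0 / ε) ∩ Set.Ioi 0 : Set ℝ) =ᵐ[volume] Set.Ioi (dist y x0 / ε) := by
      have h0 : 0 ≤ dist y x0 / ε := by positivity
      have := (Ioi_ae_eq_Ici (a := dist y x0 / ε) (μ := volume)).symm.inter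
        (ae_eq_refl (Set.Ioi (0:ℝ)))
      refine this.trans ?_
      rw [Set.Ioi_inter_Ioi, sup_eq_left.2 h0]
      exact ae_eq_refl _
    rw [setLIntegral_congr hae, kd_lintegral (by positivity), pk_eq hε,
      ENNReal.ofReal_mul (by positivity), Real.dist_eq, div_pow, div_pow, sq_abs]
    ring
  simp_rw [e1]
  rw [lintegral_lintegral_swap]
  · refine lintegral_congr fun s => ?_
    rw [← lintegral_const_mul _ hg, ← lintegral_const_mul _ (hg.const_mul _),
      ← lintegral_indicator Metric.isClosed_closedBall.measurableSet]
    refine lintegral_congr fun y => ?_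
    by_cases h : dist y x0 ≤ ε * s
    · rw [Set.indicator_of_mem (show (y, s) ∈ S from h),
        Set.indicator_of_mem (Metric.mem_closedBall.2 h)]
    · rw [Set.indicator_of_notMem (show (y, s) ∉ S from h),
        Set.indicator_of_notMem (fun h' => h (Metric.mem_closedBall.1 h'))]
  · refine Measurable.aemeasurable ?_
    refine Measurable.indicator ?_ hSm
    exact (hkm.comp measurable_snd).mul ((hg.comp measurable_fst).const_mul _)

lemma ball_meas (x0 : ℝ) {g : ℝ → ENNReal} (hg : Measurable g) :
    Measurable fun r : ℝ => ∫⁻ y in Metric.closedBall x0 r, g y := by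
  have : (fun r : ℝ => ∫⁻ y in Metric.closedBall x0 r, g y) = fun r =>
      ∫⁻ y, ({p : ℝ × ℝ | dist p.2 x0 ≤ p.1}).indicator (fun p => g p.2) (r, y) := by
    funext r
    rw [← lintegral_indicator Metric.isClosed_closedBall.measurableSet]
    rfl
  rw [this]
  refine Measurable.lintegral_prod_right' ?_
  refine Measurable.indicator (by fun_prop) (measurableSet_le (by fun_prop) (by fun_prop))

lemma poisson_lebesgue_point {h : ℝ → ℂ} (hm : Measurable h) (hi : Integrable h) (x0 : ℝ)
    (hx : Tendsto (fun r : ℝ => ⨍ y in Metric.closedBall x0 r, ‖h y - h x0‖) (𝓝[>] 0) (𝓝 0)) :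
    Tendsto (fun ε => ∫⁻ y, ENNReal.ofReal (pk ε (y - x0)) * ‖h y - h x0‖ₑ) (𝓝[>] 0) (𝓝 0) := by
  set g : ℝ → ENNReal := fun y => ‖h y - h x0‖ₑ with hg
  have hgm : Measurable g := (hm.sub_const _).enorm
  set u : ℝ → ENNReal := fun r => ENNReal.ofReal r⁻¹ * ∫⁻ y in Metric.closedBall x0 r, g y with hu
  have hfin : ∀ r : ℝ, IntegrableOn (fun y => ‖h y - h x0‖) (Metric.closedBall x0 r) := fun r =>
    (hi.integrableOn.sub (integrableOn_const (by rw [Real.volume_closedBall]; exact ENNReal.ofReal_ne_top))).norm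
  have hug : ∀ r : ℝ, 0 < r → u r = ENNReal.ofReal (2 * ⨍ y in Metric.closedBall x0 r, ‖h y - h x0‖) := by
    intro r hr
    have : ∫⁻ y in Metric.closedBall x0 r, g y =
        ENNReal.ofReal (∫ y in Metric.closedBall x0 r, ‖h y - h x0‖) := by
      rw [ofReal_integral_eq_lintegral_ofReal (hfin r) (Eventually.of_forall fun _ => norm_nonneg _)]
      simp [g]
    simp only [hu]
    rw [this, ← ENNReal.ofReal_mul (by positivity), setAverage_eq]
    congr 1
    simp only [measureReal_def, Real.volume_closedBall, smul_eq_mul]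
    rw [ENNReal.toReal_ofReal (by positivity)]
    field_simp
  have hu0 : Tendsto u (𝓝[>] 0) (𝓝 0) := by
    have h1 := ENNReal.tendsto_ofReal (hx.const_mul 2)
    rw [mul_zero, ENNReal.ofReal_zero] at h1
    refine h1.congr' ?_
    filter_upwards [self_mem_nhdsWithin] with r hr
    exact (hug r hr).symm
  -- uniform bound
  obtain ⟨M, hMt, hM⟩ : ∃ M : ENNReal, M ≠ ⊤ ∧ ∀ r, 0 < r → u r ≤ M := by
    have h1 := (tendsto_order.1 hu0).2 1 (by norm_num)
    rw [eventually_nhdsWithin_iff, Metric.eventually_nhds_iff] at h1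
    obtain ⟨δ, hδ, h1⟩ := h1
    refine ⟨1 + (ENNReal.ofReal δ⁻¹ * (∫⁻ y, ‖h y‖ₑ) + 2 * ‖h x0‖ₑ), ?_, fun r hr => ?_⟩
    · have : ∫⁻ y, ‖h y‖ₑ ≠ ⊤ := hi.hasFiniteIntegral.ne
      refine ENNReal.add_ne_top.2 ⟨ENNReal.one_ne_top, ENNReal.add_ne_top.2
        ⟨ENNReal.mul_ne_top ENNReal.ofReal_ne_top this,
          ENNReal.mul_ne_top (by norm_num) enorm_ne_top⟩⟩
    · by_cases hrδ : r < δ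
      · have := h1 (y := r) (by rw [Real.dist_eq, sub_zero, abs_of_pos hr]; exact hrδ) hr
        exact this.le.trans le_self_add
      · refine le_trans ?_ le_add_self
        push Not at hrδ
        have : ∫⁻ y in Metric.closedBall x0 r, g y ≤
            (∫⁻ y, ‖h y‖ₑ) + ENNReal.ofReal (2 * r) * ‖h x0‖ₑ := by
          calc _ ≤ ∫⁻ y in Metric.closedBall x0 r, (‖h y‖ₑ + ‖h x0‖ₑ) :=
                lintegral_mono fun y => enorm_sub_le
            _ = (∫⁻ y in Metric.closedBall x0 r, ‖h y‖ₑ) + ∫⁻ y in Metric.closedBall x0 r, ‖h x0‖ₑ :=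
                lintegral_add_right _ measurable_const
            _ ≤ _ := by
              gcongr
              · exact Measure.restrict_le_self
              · rw [setLIntegral_const, Real.volume_closedBall, mul_comm]
        simp only [hu]
        refine (mul_le_mul_right this _).trans ?_
        rw [mul_add, ← mul_assoc, ← ENNReal.ofReal_mul (by positivity)]
        gcongr
        · have : r⁻¹ * (2 * r) = 2 := by field_simp
          rw [this]; simp
  have hmain : Tendsto (fun ε : ℝ => ∫⁻ s in Set.Ioi 0, ENNReal.ofReal (kd s * s) * u (ε * s))
      (𝓝[>] 0) (𝓝 (∫⁻ s in Set.Ioi (0:ℝ), 0)) := by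
    have hum : Measurable u := by
      refine Measurable.mul ?_ (ball_meas x0 hgm)
      exact measurable_inv.ennreal_ofReal
    have hkm : Measurable fun s => ENNReal.ofReal (kd s * s) :=
      (kd_cont.mul continuous_id).measurable.ennreal_ofReal
    refine tendsto_lintegral_filter_of_dominated_convergence
      (fun s => ENNReal.ofReal (kd s * s) * M) ?_ ?_ ?_ ?_
    · exact Eventually.of_forall fun ε => hkm.mul (hum.comp (measurable_const_mul ε))
    · filter_upwards [self_mem_nhdsWithin] with ε hε
      filter_upwards [ae_restrict_mem measurableSet_Ioi] with s hs
      gcongr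
      exact hM _ (mul_pos hε hs)
    · rw [lintegral_mul_const _ hkm]
      refine ENNReal.mul_ne_top ?_ hMt
      refine ne_top_of_le_ne_top ?_ (lintegral_mono (g := fun s => ‖2 * (1 + s ^ 2)⁻¹‖ₑ) ?_)
      · exact (integrable_inv_one_add_sq.const_mul 2).integrableOn.hasFiniteIntegral.ne
      · intro s
        dsimp only
        rw [Real.enorm_eq_ofReal (by positivity)]
        refine ENNReal.ofReal_le_ofReal ?_
        unfold kd
        rw [div_mul_eq_mul_div, div_le_iff₀ (by positivity)]
        have : 2 * (1 + s ^ 2)⁻¹ * (1 + s ^ 2) ^ 2 = 2 * (1 + s ^ 2) := by field_simp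
        rw [this]; nlinarith
    · filter_upwards [ae_restrict_mem measurableSet_Ioi] with s hs
      have hs' : (0:ℝ) < s := hs
      have h1 : Tendsto (fun ε : ℝ => ε * s) (𝓝[>] 0) (𝓝[>] 0) := by
        refine tendsto_nhdsWithin_iff.2 ⟨?_, ?_⟩
        · have : Tendsto (fun ε : ℝ => ε * s) (𝓝 0) (𝓝 (0 * s)) := by
            exact (continuous_id.mul continuous_const).tendsto 0
          rw [zero_mul] at this
          exact this.mono_left nhdsWithin_le_nhds
        · filter_upwards [self_mem_nhdsWithin] with ε hε
          exact mul_pos hε hs'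
      have h2 := ENNReal.Tendsto.const_mul (a := ENNReal.ofReal (kd s * s)) (hu0.comp h1)
        (Or.inr ENNReal.ofReal_ne_top)
      rw [mul_zero] at h2
      exact h2
  rw [lintegral_zero] at hmain
  refine hmain.congr' ?_
  filter_upwards [self_mem_nhdsWithin] with ε hε
  have hε' : (0:ℝ) < ε := hε
  rw [layer hε' x0 hgm]
  refine setLIntegral_congr_fun measurableSet_Ioi fun s hs => ?_
  have hs' : (0:ℝ) < s := hs
  simp only [hu]
  have hk : 0 ≤ kd s := by unfold kd; positivity
  rw [← mul_assoc, ← mul_assoc, ← ENNReal.ofReal_mul (by positivity), ← ENNReal.ofReal_mul hk]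
  congr 2
  field_simp

lemma poisson_ae {h : ℝ → ℂ} (hm : Measurable h) (hi : Integrable h) :
    ∀ᵐ x0 : ℝ, Tendsto (fun ε => (Real.pi : ℂ)⁻¹ * ∫ y, (pk ε (y - x0) : ℂ) * h y)
      (𝓝[>] 0) (𝓝 (h x0)) := by
  filter_upwards [IsUnifLocDoublingMeasure.ae_tendsto_average_norm_sub (volume : Measure ℝ)
    hi.locallyIntegrable 1] with x0 hx0
  have hx := hx0 (l := 𝓝[>] (0:ℝ)) (fun _ => x0) (fun r => r) tendsto_id (by
    filter_upwards [self_mem_nhdsWithin] with r hr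
    have : (0:ℝ) < r := hr
    simp [this.le])
  have hP := poisson_lebesgue_point hm hi x0 hx
  have hπ : (Real.pi : ℂ) ≠ 0 := by exact_mod_cast Real.pi_ne_zero
  have h1 : Tendsto (fun ε => ∫ y, (pk ε (y - x0) : ℂ) * h y) (𝓝[>] 0) (𝓝 (Real.pi * h x0)) := by
    rw [tendsto_iff_edist_tendsto_0]
    refine tendsto_of_tendsto_of_tendsto_of_le_of_le' tendsto_const_nhds hP
      (Eventually.of_forall fun _ => zero_le) ?_
    filter_upwards [self_mem_nhdsWithin] with ε hε
    have hε' : (0:ℝ) < ε := hε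
    have i0 := pk_integrable hε' x0
    have i1 : Integrable fun y => (pk ε (y - x0) : ℂ) := i0.ofReal
    have i2 : Integrable fun y => (pk ε (y - x0) : ℂ) * h y := by
      refine hi.bdd_mul (c := ε⁻¹) i1.aestronglyMeasurable (Eventually.of_forall fun y => ?_)
      rw [Complex.norm_real, Real.norm_of_nonneg (pk_nonneg hε' _)]
      exact pk_le hε' _
    have e1 : (Real.pi : ℂ) * h x0 = ∫ y, (pk ε (y - x0) : ℂ) * h x0 := by
      rw [integral_mul_const, integral_complex_ofReal, pk_integral hε']
    rw [e1, edist_eq_enorm_sub, ← integral_sub i2 (i1.mul_const _)]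
    refine (enorm_integral_le_lintegral_enorm _).trans (lintegral_mono fun y => ?_)
    dsimp only
    rw [← mul_sub, enorm_mul]
    gcongr
    rw [← ofReal_norm, Complex.norm_real, Real.norm_of_nonneg (pk_nonneg hε' _)]
  have h2 := h1.const_mul (Real.pi : ℂ)⁻¹
  rwa [inv_mul_cancel_left₀ hπ] at h2

lemma resolvent_bound (A : SelfAdjointOp H) {z : ℂ} (hz : 0 < z.im) :
    ‖A.resolvent z‖ ≤ z.im⁻¹ := by
  refine ContinuousLinearMap.opNorm_le_bound _ (by positivity) fun x => ?_
  set u : A.dom := ⟨A.resolvent z x, A.resolvent_mem hz.ne' x⟩ with hu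
  have hux : A.resolvent z x = (u : H) := rfl
  have h1 : A.op u - z • (u : H) = x := A.op_resolvent hz.ne' x
  have h2 : (⟪(u : H), A.op u⟫_ℂ).im = 0 := by
    have h := A.symmetric u u
    rw [← inner_conj_symm] at h
    exact Complex.conj_eq_iff_im.1 h
  have h3 : (⟪(u : H), x⟫_ℂ).im = -(z.im * ‖(u : H)‖ ^ 2) := by
    conv_lhs => rw [← h1]
    rw [inner_sub_right, inner_smul_right, inner_self_eq_norm_sq_to_K, Complex.sub_im, h2]
    rw [zero_sub]
    have : ((‖(u:H)‖ : ℂ)) ^ 2 = ((‖(u:H)‖ ^ 2 : ℝ) : ℂ) := by norm_cast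
    erw [this]
    rw [Complex.im_mul_ofReal]
  have h4 : z.im * ‖(u : H)‖ ^ 2 ≤ ‖(u : H)‖ * ‖x‖ := by
    have := (Complex.abs_im_le_norm ⟪(u : H), x⟫_ℂ).trans (norm_inner_le_norm (u : H) x)
    rw [h3, abs_neg, abs_of_nonneg (by positivity)] at this
    exact this
  rw [hux]
  by_cases h0 : ‖(u : H)‖ = 0
  · rw [h0]; positivity
  · have hp : 0 < ‖(u : H)‖ := lt_of_le_of_ne (norm_nonneg _) (Ne.symm h0)
    have : z.im * ‖(u : H)‖ ≤ ‖x‖ := by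
      refine le_of_mul_le_mul_left ?_ hp
      linarith [h4, sq ‖(u : H)‖, show ‖(u : H)‖ * (z.im * ‖(u : H)‖) = z.im * ‖(u : H)‖ ^ 2 by ring]
    rw [inv_mul_eq_div, le_div_iff₀ hz]
    linarith

lemma one_norm_le : ‖(1 : H →L[ℂ] H)‖ ≤ 1 := ContinuousLinearMap.norm_id_le

lemma c_ne (t : ℝ) : (1 : ℂ) + (t : ℂ) * Complex.I ≠ 0 := by
  intro h
  have := congrArg Complex.re h
  simp at this

lemma c_norm_sq (t : ℝ) : ‖(1 : ℂ) + (t : ℂ) * Complex.I‖ ^ 2 = 1 + t ^ 2 := by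
  rw [← Complex.normSq_eq_norm_sq, Complex.normSq_apply]; simp; ring

lemma c_norm_ge (t : ℝ) : 1 ≤ ‖(1 : ℂ) + (t : ℂ) * Complex.I‖ := by
  have h := c_norm_sq t
  have h0 := norm_nonneg ((1 : ℂ) + (t : ℂ) * Complex.I)
  nlinarith [sq_nonneg t]

section oplog
variable {X : H →L[ℂ] H}

lemma shift_eq (X : H →L[ℂ] H) (t : ℝ) : (1 + X) + ((t : ℂ) * Complex.I) • (1 : H →L[ℂ] H) =
    ((1 : ℂ) + (t : ℂ) * Complex.I) • (1 : H →L[ℂ] H) + X := by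
  rw [add_smul, one_smul]; abel

lemma shift_unit (hX : ‖X‖ ≤ 1 / 2) (t : ℝ) :
    IsUnit ((1 + X) + ((t : ℂ) * Complex.I) • (1 : H →L[ℂ] H)) := by
  set c : ℂ := (1 : ℂ) + (t : ℂ) * Complex.I with hc
  have hc0 : c ≠ 0 := c_ne t
  rw [shift_eq, ← hc]
  have e : c • (1 : H →L[ℂ] H) + X = c • (1 - (-(c⁻¹ • X))) := by
    rw [sub_neg_eq_add, smul_add, smul_smul, mul_inv_cancel₀ hc0, one_smul]
  rw [e]
  have h1 : ‖-(c⁻¹ • X)‖ < 1 := by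
    rw [norm_neg, norm_smul, norm_inv]
    have : ‖c‖⁻¹ ≤ 1 := inv_le_one_of_one_le₀ (c_norm_ge t)
    have := mul_le_mul this hX (norm_nonneg _) zero_le_one
    linarith
  have h2 := isUnit_one_sub_of_norm_lt_one h1
  exact h2.smul (Units.mk0 c hc0)

lemma shift_inv (hX : ‖X‖ ≤ 1 / 2) (t : ℝ) :
    ∃ S : H →L[ℂ] H, ‖S‖ ≤ 2 ∧
      logIntegrand (1 + X) t = -(((1 : ℂ) + (t : ℂ) * Complex.I)⁻¹ ^ 2) • X +
        (((1 : ℂ) + (t : ℂ) * Complex.I)⁻¹ ^ 2) • (X * S * X) := by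
  have hU := shift_unit hX t
  unfold logIntegrand
  set S := Ring.inverse ((1 + X) + ((t : ℂ) * Complex.I) • (1 : H →L[ℂ] H)) with hS
  have h1 := Ring.mul_inverse_cancel _ hU
  have h2 := Ring.inverse_mul_cancel _ hU
  rw [← hS, shift_eq] at h1 h2
  have hn := c_norm_ge t
  have hc0 := c_ne t
  set c : ℂ := (1 : ℂ) + (t : ℂ) * Complex.I with hc
  rw [add_mul, smul_mul_assoc, one_mul] at h1
  rw [mul_add, mul_smul_comm, mul_one] at h2
  have h1' : c • S = 1 - X * S := eq_sub_of_add_eq h1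
  have h2' : c • S = 1 - S * X := eq_sub_of_add_eq h2
  refine ⟨S, ?_, ?_⟩
  · have e : ‖c‖ * ‖S‖ = ‖1 - X * S‖ := by rw [← h1', norm_smul]
    have e2 : ‖1 - X * S‖ ≤ 1 + 1 / 2 * ‖S‖ :=
      (norm_sub_le _ _).trans (add_le_add one_norm_le ((norm_mul_le _ _).trans (by gcongr)))
    have e3 : ‖S‖ ≤ ‖c‖ * ‖S‖ := le_mul_of_one_le_left (norm_nonneg _) hn
    linarith
  · have a1 : S = c⁻¹ • (1 - X * S) := by rw [← h1', smul_smul, inv_mul_cancel₀ hc0, one_smul]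
    have a2 : S = c⁻¹ • (1 - S * X) := by rw [← h2', smul_smul, inv_mul_cancel₀ hc0, one_smul]
    have a3 : X * S = c⁻¹ • (X - X * S * X) := by
      conv_lhs => rw [a2]
      rw [mul_smul_comm, mul_sub, mul_one, mul_assoc]
    conv_lhs => rw [a1, a3]
    rw [smul_sub, smul_smul, smul_sub, ← sq, neg_smul]
    abel

lemma logIntegrand_norm (hX : ‖X‖ ≤ 1 / 2) (t : ℝ) :
    ‖logIntegrand (1 + X) t‖ ≤ (1 + t ^ 2)⁻¹ := by
  obtain ⟨S, hS, e⟩ := shift_inv hX t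
  rw [e]
  have hc : ‖((1 : ℂ) + (t : ℂ) * Complex.I)⁻¹ ^ 2‖ = (1 + t ^ 2)⁻¹ := by
    rw [norm_pow, norm_inv, inv_pow, c_norm_sq]
  refine (norm_add_le _ _).trans ?_
  rw [norm_smul, norm_smul, norm_neg, hc, ← mul_add]
  refine mul_le_of_le_one_right (by positivity) ?_
  have : ‖X * S * X‖ ≤ 1 / 2 * 2 * (1 / 2) :=
    (norm_mul_le _ _).trans (mul_le_mul ((norm_mul_le _ _).trans
      (mul_le_mul hX hS (norm_nonneg _) (by norm_num))) hX (norm_nonneg _) (by norm_num))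
  linarith

lemma logIntegrand_cont (hX : ‖X‖ ≤ 1 / 2) : Continuous (logIntegrand (1 + X)) := by
  unfold logIntegrand
  refine Continuous.sub ?_ ?_
  · rw [continuous_iff_continuousAt]
    intro t
    obtain ⟨U, hU⟩ := shift_unit hX t
    have h1 : ContinuousAt (Ring.inverse : (H →L[ℂ] H) → _)
        ((1 + X) + ((t : ℂ) * Complex.I) • (1 : H →L[ℂ] H)) := by
      rw [← hU]; exact NormedRing.inverse_continuousAt U
    refine ContinuousAt.comp (f := fun t : ℝ =>
      (1 + X) + ((t : ℂ) * Complex.I) • (1 : H →L[ℂ] H)) h1 ?_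
    have hcn : Continuous fun t : ℝ => (1 + X) + ((t : ℂ) * Complex.I) • (1 : H →L[ℂ] H) := by
      fun_prop
    exact hcn.continuousAt
  · have hcn : Continuous fun t : ℝ => ((1 : ℂ) + (t : ℂ) * Complex.I)⁻¹ :=
      Continuous.inv₀ (by fun_prop) c_ne
    exact hcn.smul continuous_const

lemma logIntegrand_integrable (hX : ‖X‖ ≤ 1 / 2) :
    IntegrableOn (logIntegrand (1 + X)) (Set.Ioi 0) := by
  refine Integrable.mono' integrable_inv_one_add_sq.integrableOn
    (logIntegrand_cont hX).aestronglyMeasurable (Eventually.of_forall fun t => ?_)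
  exact logIntegrand_norm hX t

lemma opLog_eq (hX : ‖X‖ ≤ 1 / 2) :
    opLog (1 + X) = (-Complex.I) • ∫ t in Set.Ioi (0:ℝ), logIntegrand (1 + X) t := by
  unfold opLog
  refine Tendsto.limUnder_eq ?_
  have h := intervalIntegral_tendsto_integral_Ioi (0:ℝ) (logIntegrand_integrable hX)
    (tendsto_id (α := ℝ) (x := atTop))
  exact h.const_smul (-Complex.I)

lemma opLog_bound (L Q : H →L[ℂ] H) (hq : ‖L‖ ^ 2 * ‖Q‖ ≤ 1 / 2) (e : H) :
    ‖⟪e, opLog (1 + adjoint L * Q * L) e⟫_ℂ‖ ≤ Real.pi * ‖Q‖ * ‖L e‖ ^ 2 := by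
  set X := adjoint L * Q * L with hXd
  have hL : ‖adjoint L‖ = ‖L‖ := by rw [← star_eq_adjoint, norm_star]
  have hX : ‖X‖ ≤ 1 / 2 := by
    refine ((norm_mul_le _ _).trans ?_).trans hq
    have := norm_mul_le (adjoint L) Q
    rw [hL] at this
    calc _ ≤ (‖L‖ * ‖Q‖) * ‖L‖ := by gcongr
      _ = _ := by ring
  rw [opLog_eq hX, smul_apply, inner_smul_right, norm_mul, norm_neg, Complex.norm_I, one_mul]
  have hint := logIntegrand_integrable hX
  rw [ContinuousLinearMap.integral_apply hint, ← integral_inner (hint.apply_continuousLinearMap e)]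
  have hb : ∀ t, ‖⟪e, logIntegrand (1 + X) t e⟫_ℂ‖ ≤ (2 * ‖Q‖ * ‖L e‖ ^ 2) * (1 + t ^ 2)⁻¹ := by
    intro t
    obtain ⟨S, hS, he⟩ := shift_inv hX t
    have hc : ‖((1 : ℂ) + (t : ℂ) * Complex.I)⁻¹ ^ 2‖ = (1 + t ^ 2)⁻¹ := by
      rw [norm_pow, norm_inv, inv_pow, c_norm_sq]
    have b1 : ‖⟪e, X e⟫_ℂ‖ ≤ ‖Q‖ * ‖L e‖ ^ 2 := by
      have : ⟪e, X e⟫_ℂ = ⟪L e, Q (L e)⟫_ℂ := by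
        change ⟪e, adjoint L (Q (L e))⟫_ℂ = _
        rw [adjoint_inner_right]
      rw [this]
      refine (norm_inner_le_norm _ _).trans ?_
      have := le_opNorm Q (L e)
      calc _ ≤ ‖L e‖ * (‖Q‖ * ‖L e‖) := by gcongr
        _ = _ := by ring
    have b2 : ‖⟪e, (X * S * X) e⟫_ℂ‖ ≤ ‖Q‖ * ‖L e‖ ^ 2 := by
      have : ⟪e, (X * S * X) e⟫_ℂ = ⟪L e, Q (L (S (adjoint L (Q (L e)))))⟫_ℂ := by
        change ⟪e, adjoint L (Q (L (S (adjoint L (Q (L e))))))⟫_ℂ = _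
        rw [adjoint_inner_right]
      rw [this]
      refine (norm_inner_le_norm _ _).trans ?_
      have : ‖Q (L (S (adjoint L (Q (L e)))))‖ ≤ ‖Q‖ * (‖L‖ * (2 * (‖L‖ * (‖Q‖ * ‖L e‖)))) := by
        refine le_opNorm_of_le _ (le_opNorm_of_le _ ?_)
        refine le_of_opNorm_le_of_le _ hS ?_
        rw [← hL]
        exact le_opNorm_of_le _ (le_opNorm _ _)
      calc _ ≤ ‖L e‖ * (‖Q‖ * (‖L‖ * (2 * (‖L‖ * (‖Q‖ * ‖L e‖))))) := by gcongr
        _ = (2 * (‖L‖ ^ 2 * ‖Q‖)) * (‖Q‖ * ‖L e‖ ^ 2) := by ring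
        _ ≤ 1 * (‖Q‖ * ‖L e‖ ^ 2) := by gcongr; linarith
        _ = _ := one_mul _
    rw [he, add_apply, inner_add_right, smul_apply, smul_apply, inner_smul_right, inner_smul_right]
    refine (norm_add_le _ _).trans ?_
    rw [norm_mul, norm_mul, norm_neg, hc]
    have hp : 0 ≤ (1 + t ^ 2)⁻¹ := by positivity
    nlinarith
  refine (norm_integral_le_of_norm_le ((integrable_inv_one_add_sq.integrableOn
    (s := Set.Ioi (0:ℝ))).const_mul (2 * ‖Q‖ * ‖L e‖ ^ 2)) (Eventually.of_forall hb)).trans ?_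
  rw [integral_const_mul, integral_Ioi_inv_one_add_sq, Real.arctan_zero]
  apply le_of_eq; ring

end oplog

lemma basis_countable [SeparableSpace H] {ι : Type*} (b : HilbertBasis ι ℂ H) : Countable ι := by
  refine Pairwise.countable_of_isOpen_disjoint (s := fun i => Metric.ball (b i) (1 / 2)) ?_
    (fun _ => Metric.isOpen_ball) (fun i => ⟨b i, Metric.mem_ball_self (by norm_num)⟩)
  intro i j hij
  refine Metric.ball_disjoint_ball ?_
  have h1 : ‖b i - b j‖ ^ 2 = 2 := by
    rw [norm_sub_sq (𝕜 := ℂ), b.orthonormal.1 i, b.orthonormal.1 j, b.orthonormal.2 hij]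
    norm_num
  rw [dist_eq_norm]
  nlinarith [norm_nonneg (b i - b j)]

lemma pos_inner_real {A : H →L[ℂ] H} (hA : A.IsPositive) (f : H) :
    ⟪f, A f⟫_ℂ = (((⟪f, A f⟫_ℂ).re : ℝ) : ℂ) := by
  have h := hA.inner_nonneg_right f
  rw [Complex.nonneg_iff] at h
  apply Complex.ext
  · simp
  · simp [h.2.symm]

lemma kernel_im {x ε y : ℝ} (hε : 0 < ε) :
    (2 * Complex.I)⁻¹ * (((y : ℂ) - (x + ε * Complex.I))⁻¹ -
      (starRingEnd ℂ) (((y : ℂ) - (x + ε * Complex.I))⁻¹)) = (pk ε (y - x) : ℂ) := by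
  have h : ∀ w : ℂ, (2 * Complex.I)⁻¹ * (w - (starRingEnd ℂ) w) = (w.im : ℂ) := by
    intro w
    rw [Complex.sub_conj]
    have : (2 * Complex.I) ≠ 0 := by simp
    field_simp
    push_cast; ring
  rw [h]
  congr 1
  rw [Complex.inv_im, Complex.normSq_apply]
  simp [pk]
  ring

lemma imPart_rep {Ξ : ℝ → H →L[ℂ] H} {G : ℂ → H →L[ℂ] H}
    (hpos : ∀ᵐ l, (Ξ l).IsPositive)
    (hrep : ∀ z : ℂ, 0 < z.im → ∀ f g : H,
      Integrable (fun l : ℝ => ((l : ℂ) - z)⁻¹ * ⟪f, Ξ l g⟫_ℂ) ∧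
      ⟪f, G z g⟫_ℂ = ∫ l : ℝ, ((l : ℂ) - z)⁻¹ * ⟪f, Ξ l g⟫_ℂ)
    {ε : ℝ} (hε : 0 < ε) (x : ℝ) (f g : H) :
    Integrable (fun y : ℝ => (pk ε (y - x) : ℂ) * ⟪f, Ξ y g⟫_ℂ) ∧
    ⟪f, imPart (G ((x : ℂ) + (ε : ℂ) * Complex.I)) g⟫_ℂ =
      ∫ y : ℝ, (pk ε (y - x) : ℂ) * ⟪f, Ξ y g⟫_ℂ := by
  set z : ℂ := (x : ℂ) + (ε : ℂ) * Complex.I with hz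
  have hzim : 0 < z.im := by simp [hz, hε]
  obtain ⟨i1, e1⟩ := hrep z hzim f g
  obtain ⟨i2, e2⟩ := hrep z hzim g f
  have hae : (fun y : ℝ => (pk ε (y - x) : ℂ) * ⟪f, Ξ y g⟫_ℂ) =ᵐ[volume] fun y : ℝ =>
      (2 * Complex.I)⁻¹ * (((y : ℂ) - z)⁻¹ * ⟪f, Ξ y g⟫_ℂ -
        (starRingEnd ℂ) (((y : ℂ) - z)⁻¹ * ⟪g, Ξ y f⟫_ℂ)) := by
    filter_upwards [hpos] with y hy
    rw [map_mul, inner_conj_symm, hy.inner_left_eq_inner_right, ← kernel_im hε, ← hz]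
    ring
  have i2' : Integrable fun y : ℝ => (starRingEnd ℂ) (((y : ℂ) - z)⁻¹ * ⟪g, Ξ y f⟫_ℂ) :=
    (Complex.conjCLE : ℂ →L[ℝ] ℂ).integrable_comp i2
  refine ⟨((i1.sub i2').const_mul _).congr hae.symm, ?_⟩
  rw [integral_congr_ae hae, integral_const_mul, integral_sub i1 i2', integral_conj, ← e1, ← e2]
  unfold imPart
  rw [smul_apply, inner_smul_right, sub_apply, inner_sub_right, adjoint_inner_right,
    inner_conj_symm]

lemma imPart_quad_le (T : H →L[ℂ] H) (e : H) : ‖⟪e, imPart T e⟫_ℂ‖ ≤ ‖⟪e, T e⟫_ℂ‖ := by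
  unfold imPart
  rw [smul_apply, inner_smul_right, sub_apply, inner_sub_right, adjoint_inner_right, norm_mul]
  have h1 : ‖⟪T e, e⟫_ℂ‖ = ‖⟪e, T e⟫_ℂ‖ := by rw [← inner_conj_symm, RCLike.norm_conj]
  have h2 := norm_sub_le ⟪e, T e⟫_ℂ ⟪T e, e⟫_ℂ
  have h3 : ‖(2 * Complex.I)⁻¹‖ = 1 / 2 := by simp
  rw [h3]
  linarith

lemma quad_rep {Ξ : ℝ → H →L[ℂ] H} {G : ℂ → H →L[ℂ] H}
    (hpos : ∀ᵐ l, (Ξ l).IsPositive)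
    (hrep : ∀ z : ℂ, 0 < z.im → ∀ f g : H,
      Integrable (fun l : ℝ => ((l : ℂ) - z)⁻¹ * ⟪f, Ξ l g⟫_ℂ) ∧
      ⟪f, G z g⟫_ℂ = ∫ l : ℝ, ((l : ℂ) - z)⁻¹ * ⟪f, Ξ l g⟫_ℂ)
    {ε : ℝ} (hε : 0 < ε) (x : ℝ) (f : H) :
    Integrable (fun y : ℝ => pk ε (y - x) * (⟪f, Ξ y f⟫_ℂ).re) ∧
    ⟪f, imPart (G ((x : ℂ) + (ε : ℂ) * Complex.I)) f⟫_ℂ =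
      ((∫ y : ℝ, pk ε (y - x) * (⟪f, Ξ y f⟫_ℂ).re : ℝ) : ℂ) ∧
    0 ≤ ∫ y : ℝ, pk ε (y - x) * (⟪f, Ξ y f⟫_ℂ).re := by
  obtain ⟨i1, e1⟩ := imPart_rep hpos hrep hε x f f
  refine ⟨?_, ?_, ?_⟩
  · have := i1.re
    refine this.congr (Eventually.of_forall fun y => ?_)
    simp
  · rw [e1, ← integral_complex_ofReal]
    refine integral_congr_ae ?_
    filter_upwards [hpos] with y hy
    rw [pos_inner_real hy f]
    push_cast
    simp
  · refine integral_nonneg_of_ae ?_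
    filter_upwards [hpos] with y hy
    exact mul_nonneg (pk_nonneg hε _) (hy.re_inner_nonneg_right f)

lemma diag_integral_bound {Ξ : ℝ → H →L[ℂ] H} {G : ℂ → H →L[ℂ] H}
    (hmeas : ∀ f g : H, Measurable fun l : ℝ => ⟪f, Ξ l g⟫_ℂ)
    (hpos : ∀ᵐ l, (Ξ l).IsPositive)
    (hrep : ∀ z : ℂ, 0 < z.im → ∀ f g : H,
      Integrable (fun l : ℝ => ((l : ℂ) - z)⁻¹ * ⟪f, Ξ l g⟫_ℂ) ∧
      ⟪f, G z g⟫_ℂ = ∫ l : ℝ, ((l : ℂ) - z)⁻¹ * ⟪f, Ξ l g⟫_ℂ)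
    {y0 D : ℝ} (hy0 : 0 < y0) (e : H)
    (hb : ∀ y : ℝ, y0 ≤ y → ‖⟪e, G ((y : ℂ) * Complex.I) e⟫_ℂ‖ ≤ y⁻¹ * D) :
    ∫⁻ l, ENNReal.ofReal (⟪e, Ξ l e⟫_ℂ).re ≤ ENNReal.ofReal (2 * D) := by
  have hcov := aecover_closedBall (μ := (volume : Measure ℝ)) (x := (0:ℝ)) (l := atTop)
    (r := fun y : ℝ => y) tendsto_id
  have hm : Measurable fun l => ENNReal.ofReal (⟪e, Ξ l e⟫_ℂ).re :=
    (Complex.measurable_re.comp (hmeas e e)).ennreal_ofReal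
  have ht := hcov.lintegral_tendsto_of_countably_generated hm.aemeasurable
  refine le_of_tendsto ht ?_
  filter_upwards [eventually_ge_atTop y0] with y hy
  have hyp : 0 < y := hy0.trans_le hy
  obtain ⟨i1, e1, n1⟩ := quad_rep hpos hrep hyp 0 e
  simp only [Complex.ofReal_zero, zero_add, sub_zero] at i1 e1 n1
  have h1 : ∫ l, pk y l * (⟪e, Ξ l e⟫_ℂ).re ≤ y⁻¹ * D := by
    have := (imPart_quad_le (G ((y : ℂ) * Complex.I)) e).trans (hb y hy)
    rw [e1, Complex.norm_real, Real.norm_of_nonneg n1] at this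
    exact this
  calc ∫⁻ l in Metric.closedBall 0 y, ENNReal.ofReal (⟪e, Ξ l e⟫_ℂ).re
      ≤ ∫⁻ l in Metric.closedBall 0 y, ENNReal.ofReal (2 * y) *
          ENNReal.ofReal (pk y l * (⟪e, Ξ l e⟫_ℂ).re) := by
        refine lintegral_mono_ae ?_
        filter_upwards [ae_restrict_mem Metric.isClosed_closedBall.measurableSet,
          ae_restrict_of_ae hpos] with l hl hp
        rw [← ENNReal.ofReal_mul (by positivity)]
        refine ENNReal.ofReal_le_ofReal ?_
        rw [← mul_assoc]
        refine le_mul_of_one_le_left (hp.re_inner_nonneg_right e) ?_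
        rw [Metric.mem_closedBall, Real.dist_eq, sub_zero] at hl
        have : l ^ 2 ≤ y ^ 2 := sq_le_sq' (abs_le.1 hl).1 (abs_le.1 hl).2
        unfold pk
        rw [mul_div_assoc', le_div_iff₀ (by positivity)]
        nlinarith
    _ ≤ ∫⁻ l, ENNReal.ofReal (2 * y) * ENNReal.ofReal (pk y l * (⟪e, Ξ l e⟫_ℂ).re) :=
        setLIntegral_le_lintegral _ _
    _ = ENNReal.ofReal (2 * y) * ENNReal.ofReal (∫ l, pk y l * (⟪e, Ξ l e⟫_ℂ).re) := by
        rw [lintegral_const_mul' _ _ ENNReal.ofReal_ne_top, ofReal_integral_eq_lintegral_ofReal i1]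
        filter_upwards [hpos] with l hp
        exact mul_nonneg (pk_nonneg hyp _) (hp.re_inner_nonneg_right e)
    _ ≤ ENNReal.ofReal (2 * D) := by
        rw [← ENNReal.ofReal_mul (by positivity)]
        refine ENNReal.ofReal_le_ofReal ?_
        calc _ ≤ 2 * y * (y⁻¹ * D) := by gcongr
          _ = 2 * D := by field_simp

set_option maxHeartbeats 1600000 in
lemma main_abs [SeparableSpace H] {Ξ : ℝ → H →L[ℂ] H} {G : ℂ → H →L[ℂ] H}
    (hmeas : ∀ f g : H, Measurable fun l : ℝ => ⟪f, Ξ l g⟫_ℂ)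
    (hpos : ∀ᵐ l, (Ξ l).IsPositive)
    (hrep : ∀ z : ℂ, 0 < z.im → ∀ f g : H,
      Integrable (fun l : ℝ => ((l : ℂ) - z)⁻¹ * ⟪f, Ξ l g⟫_ℂ) ∧
      ⟪f, G z g⟫_ℂ = ∫ l : ℝ, ((l : ℂ) - z)⁻¹ * ⟪f, Ξ l g⟫_ℂ)
    (L : H →L[ℂ] H) (hL : IsHilbertSchmidt L) {y0 C : ℝ} (hy0 : 0 < y0) (hC : 0 ≤ C)
    (hb : ∀ y : ℝ, y0 ≤ y → ∀ e : H,
      ‖⟪e, G ((y : ℂ) * Complex.I) e⟫_ℂ‖ ≤ y⁻¹ * (C * ‖L e‖ ^ 2)) :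
    ∀ᵐ l, Tendsto (fun ε : ℝ => traceNorm (Ξ l - ((Real.pi : ℂ))⁻¹ •
        imPart (G ((l : ℂ) + (ε : ℂ) * Complex.I)))) (𝓝[>] (0 : ℝ)) (𝓝 0) := by
  obtain ⟨b, hbd⟩ : ∃ b, b = (exists_hilbertBasis ℂ H).choose_spec.choose := ⟨_, rfl⟩
  have hcount := basis_countable b
  have hLs := hL _ b
  have hdm : ∀ i, Measurable fun l => dg b (Ξ l) i := fun i =>
    Complex.measurable_re.comp (hmeas _ _)
  have hdb : ∀ i, ∫⁻ l, ENNReal.ofReal (dg b (Ξ l) i) ≤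
      ENNReal.ofReal (2 * (C * ‖L (b i)‖ ^ 2)) := fun i =>
    diag_integral_bound hmeas hpos hrep hy0 (b i) (fun y hy => hb y hy (b i))
  have hdi : ∀ i, Integrable fun l => dg b (Ξ l) i := by
    intro i
    refine ⟨(hdm i).aestronglyMeasurable, ?_⟩
    rw [hasFiniteIntegral_iff_ofReal]
    · exact (hdb i).trans_lt ENNReal.ofReal_lt_top
    · filter_upwards [hpos] with l hl
      exact dg_nonneg b hl i
  have hdbi : ∀ i, ∫ l, dg b (Ξ l) i ≤ 2 * (C * ‖L (b i)‖ ^ 2) := by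
    intro i
    have h0 : 0 ≤ᵐ[volume] fun l => dg b (Ξ l) i := by
      filter_upwards [hpos] with l hl
      exact dg_nonneg b hl i
    have := hdb i
    rw [← ofReal_integral_eq_lintegral_ofReal (hdi i) h0] at this
    exact (ENNReal.ofReal_le_ofReal_iff (by positivity)).1 this
  have hsumL : Summable fun i => 2 * (C * ‖L (b i)‖ ^ 2) := (hLs.mul_left C).mul_left 2
  have hfin : ∫⁻ l, ∑' i, ENNReal.ofReal (dg b (Ξ l) i) ≠ ⊤ := by
    rw [lintegral_tsum fun i => (hdm i).ennreal_ofReal.aemeasurable]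
    refine ne_top_of_le_ne_top ?_ (ENNReal.tsum_le_tsum hdb)
    rw [← ENNReal.ofReal_tsum_of_nonneg (fun i => by positivity) hsumL]
    exact ENNReal.ofReal_ne_top
  have htm : Measurable fun l => ∑' i, ENNReal.ofReal (dg b (Ξ l) i) :=
    Measurable.ennreal_tsum fun i => (hdm i).ennreal_ofReal
  set τ : ℝ → ℝ := fun l => (∑' i, ENNReal.ofReal (dg b (Ξ l) i)).toReal with hτ
  have hτm : Measurable τ := htm.ennreal_toReal
  have hτi : Integrable τ := integrable_toReal_of_lintegral_ne_top htm.aemeasurable hfin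
  have hτs : ∀ᵐ l, HasSum (dg b (Ξ l)) (τ l) := by
    filter_upwards [hpos, ae_lt_top htm hfin] with l hl hlt
    have h0 := fun i => dg_nonneg b hl i
    obtain ⟨hs, -⟩ := summable_of_tsum_ofReal (f := dg b (Ξ l)) h0 (c := τ l)
      ENNReal.toReal_nonneg (by rw [hτ, ENNReal.ofReal_toReal hlt.ne])
    have : τ l = ∑' i, dg b (Ξ l) i := by
      simp only [hτ]
      rw [← ENNReal.ofReal_tsum_of_nonneg h0 hs, ENNReal.toReal_ofReal (tsum_nonneg h0)]
    rw [this]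
    exact hs.hasSum
  have hij : ∀ i j, Integrable fun l => ⟪b i, Ξ l (b j)⟫_ℂ := by
    intro i j
    refine ((hdi i).add (hdi j)).mono' (hmeas _ _).aestronglyMeasurable ?_
    filter_upwards [hpos] with l hl
    have h1 := offdiag_le b hl i j
    have h2 := dg_nonneg b hl i
    have h3 := dg_nonneg b hl j
    simp only [Pi.add_apply]
    refine abs_le_of_sq_le_sq' ?_ (by positivity) |>.2
    nlinarith
  have P1 : ∀ᵐ x0, ∀ i j, Tendsto (fun ε => (Real.pi : ℂ)⁻¹ *
      ∫ y, (pk ε (y - x0) : ℂ) * ⟪b i, Ξ y (b j)⟫_ℂ) (𝓝[>] 0) (𝓝 ⟪b i, Ξ x0 (b j)⟫_ℂ) := by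
    rw [ae_all_iff]; intro i
    rw [ae_all_iff]; intro j
    exact poisson_ae (hmeas _ _) (hij i j)
  have P2 := poisson_ae (h := fun l => (τ l : ℂ)) (Complex.measurable_ofReal.comp hτm) hτi.ofReal
  filter_upwards [hpos, hτs, P1, P2] with x hx hsx p1 p2
  -- properties of the approximants
  have hdiag : ∀ ε : ℝ, 0 < ε → ∀ f, ⟪f, ((Real.pi : ℂ)⁻¹ •
      imPart (G ((x : ℂ) + (ε : ℂ) * Complex.I))) f⟫_ℂ =
      ((Real.pi⁻¹ * ∫ y : ℝ, pk ε (y - x) * (⟪f, Ξ y f⟫_ℂ).re : ℝ) : ℂ) := by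
    intro ε hε f
    rw [smul_apply, inner_smul_right, (quad_rep hpos hrep hε x f).2.1]
    push_cast; rfl
  have hApos : ∀ ε : ℝ, 0 < ε → ((Real.pi : ℂ)⁻¹ •
      imPart (G ((x : ℂ) + (ε : ℂ) * Complex.I))).IsPositive := by
    intro ε hε
    rw [isPositive_iff_complex]
    intro f
    have h0 := (quad_rep hpos hrep hε x f).2.2
    have h1 := hdiag ε hε f
    rw [← inner_conj_symm, h1, Complex.conj_ofReal]
    refine ⟨by simp, ?_⟩
    simp only [RCLike.re_to_complex, Complex.ofReal_re]
    have := Real.pi_pos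
    positivity
  have hdgA : ∀ ε : ℝ, 0 < ε → ∀ i, dg b ((Real.pi : ℂ)⁻¹ •
      imPart (G ((x : ℂ) + (ε : ℂ) * Complex.I))) i =
      Real.pi⁻¹ * ∫ y : ℝ, pk ε (y - x) * dg b (Ξ y) i := by
    intro ε hε i
    rw [dg, hdiag ε hε, Complex.ofReal_re]
    rfl
  have hsumA : ∀ ε : ℝ, 0 < ε → HasSum (dg b ((Real.pi : ℂ)⁻¹ •
      imPart (G ((x : ℂ) + (ε : ℂ) * Complex.I))))
      (Real.pi⁻¹ * ∫ y : ℝ, pk ε (y - x) * τ y) := by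
    intro ε hε
    have hI : ∀ i, Integrable fun y => pk ε (y - x) * dg b (Ξ y) i := fun i =>
      (quad_rep hpos hrep hε x (b i)).1
    have hn : Summable fun i => ∫ y, ‖pk ε (y - x) * dg b (Ξ y) i‖ := by
      refine Summable.of_nonneg_of_le (fun i => integral_nonneg fun y => norm_nonneg _) ?_
        (hsumL.mul_left ε⁻¹)
      intro i
      calc ∫ y, ‖pk ε (y - x) * dg b (Ξ y) i‖ ≤ ∫ y, ε⁻¹ * dg b (Ξ y) i := by
            refine integral_mono_ae (hI i).norm ((hdi i).const_mul _) ?_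
            filter_upwards [hpos] with y hy
            have h0 := dg_nonneg b hy i
            have h1 := pk_nonneg hε (y - x)
            rw [Real.norm_of_nonneg (by positivity)]
            exact mul_le_mul_of_nonneg_right (pk_le hε _) h0
        _ ≤ _ := by
            rw [integral_const_mul]
            exact mul_le_mul_of_nonneg_left (hdbi i) (by positivity)
    have h := (hasSum_integral_of_summable_integral_norm hI hn).mul_left Real.pi⁻¹
    have e1 : ∫ y, ∑' i, pk ε (y - x) * dg b (Ξ y) i = ∫ y, pk ε (y - x) * τ y := by
      refine integral_congr_ae ?_
      filter_upwards [hτs] with y hy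
      exact (hy.mul_left _).tsum_eq
    rw [e1] at h
    rw [show dg b ((Real.pi : ℂ)⁻¹ • imPart (G ((x : ℂ) + (ε : ℂ) * Complex.I))) = _ from
      funext (hdgA ε hε)]
    exact h
  have hev : ∀ᶠ ε : ℝ in 𝓝[>] 0, 0 < ε := self_mem_nhdsWithin
  refine gruemm hx (hev.mono hApos) b hbd hsx.summable (hev.mono fun ε hε => (hsumA ε hε).summable)
    ?_ ?_
  · rw [hsx.tsum_eq]
    have := (Complex.continuous_re.tendsto _).comp p2
    rw [Complex.ofReal_re] at this
    refine this.congr' ?_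
    filter_upwards [hev] with ε hε
    rw [(hsumA ε hε).tsum_eq]
    simp only [Function.comp]
    have : ∫ y, (pk ε (y - x) : ℂ) * (τ y : ℂ) = ((∫ y, pk ε (y - x) * τ y : ℝ) : ℂ) := by
      rw [← integral_complex_ofReal]
      push_cast; rfl
    rw [this, ← Complex.ofReal_inv, ← Complex.ofReal_mul, Complex.ofReal_re]
  · intro i j
    refine (p1 i j).congr' ?_
    filter_upwards [hev] with ε hε
    rw [smul_apply, inner_smul_right, (imPart_rep hpos hrep hε x (b i) (b j)).2]

lemma bound_aux (L R : H →L[ℂ] H) {y : ℝ} (hy : 2 * ‖L‖ ^ 2 + 1 ≤ y) (hR : ‖R‖ ≤ y⁻¹) (e : H) :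
    ‖⟪e, opLog (1 + adjoint L * R * L) e⟫_ℂ‖ ≤ y⁻¹ * (Real.pi * ‖L e‖ ^ 2) := by
  have hyp : 0 < y := lt_of_lt_of_le (by positivity) hy
  refine (opLog_bound L R ?_ e).trans ?_
  · calc ‖L‖ ^ 2 * ‖R‖ ≤ ‖L‖ ^ 2 * y⁻¹ := by gcongr
      _ ≤ 1 / 2 := by
        rw [← div_eq_mul_inv, div_le_iff₀ hyp]; linarith
  · have := Real.pi_pos
    calc Real.pi * ‖R‖ * ‖L e‖ ^ 2 ≤ Real.pi * y⁻¹ * ‖L e‖ ^ 2 := by gcongr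
      _ = _ := by ring

lemma imPart_neg (T : H →L[ℂ] H) : imPart (-T) = -imPart T := by
  unfold imPart
  rw [map_neg, ← smul_neg]
  congr 1
  abel

/-- Lemma 3.4 (boundary values): for a.e. `λ ∈ ℝ` the spectral shift operators are the
trace-norm limits `Ξ₊(λ) = lim_{ε↓0} π⁻¹ Im log Φ₊(λ+iε)` and
`Ξ₋(λ) = -lim_{ε↓0} π⁻¹ Im log Φ̃₋(λ+iε)`. -/
theorem spectral_shift_operator_boundary_values [SeparableSpace H]
    (H0 Hp : SelfAdjointOp H) (J K : H →L[ℂ] H)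
    (hJ : IsSelfAdjoint J) (hJ2 : J * J = 1) (hK : IsHilbertSchmidt K)
    (hsump : IsSumOf Hp H0 (K * Jplus J * ContinuousLinearMap.adjoint K))
    (Ξp Ξm : ℝ → H →L[ℂ] H)
    (hmeasp : ∀ f g : H, Measurable fun l : ℝ => ⟪f, Ξp l g⟫_ℂ)
    (hmeasm : ∀ f g : H, Measurable fun l : ℝ => ⟪f, Ξm l g⟫_ℂ)
    (hbdp : ∀ᵐ l ∂(volume : Measure ℝ),
      (Ξp l).IsPositive ∧ ((1 : H →L[ℂ] H) - Ξp l).IsPositive ∧ IsTraceClass (Ξp l))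
    (hbdm : ∀ᵐ l ∂(volume : Measure ℝ),
      (Ξm l).IsPositive ∧ ((1 : H →L[ℂ] H) - Ξm l).IsPositive ∧ IsTraceClass (Ξm l))
    (hrepp : ∀ z : ℂ, z.im ≠ 0 → ∀ f g : H,
      Integrable (fun l : ℝ => ((l : ℂ) - z)⁻¹ * ⟪f, Ξp l g⟫_ℂ) ∧
      ⟪f, logHerg (PhiPlus H0 J K) z g⟫_ℂ =
        ∫ l : ℝ, ((l : ℂ) - z)⁻¹ * ⟪f, Ξp l g⟫_ℂ)
    (hrepm : ∀ z : ℂ, z.im ≠ 0 → ∀ f g : H,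
      Integrable (fun l : ℝ => ((l : ℂ) - z)⁻¹ * ⟪f, Ξm l g⟫_ℂ) ∧
      ⟪f, logAntiHerg (PhiMinusT Hp J K) z g⟫_ℂ =
        -∫ l : ℝ, ((l : ℂ) - z)⁻¹ * ⟪f, Ξm l g⟫_ℂ) :
    ∀ᵐ l ∂(volume : Measure ℝ),
      Tendsto (fun ε : ℝ => traceNorm (Ξp l - ((Real.pi : ℂ))⁻¹ •
          imPart (opLog (PhiPlus H0 J K ((l : ℂ) + (ε : ℂ) * Complex.I)))))
        (𝓝[>] (0 : ℝ)) (𝓝 0) ∧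
      Tendsto (fun ε : ℝ => traceNorm (Ξm l + ((Real.pi : ℂ))⁻¹ •
          imPart (opLogAnti (PhiMinusT Hp J K ((l : ℂ) + (ε : ℂ) * Complex.I)))))
        (𝓝[>] (0 : ℝ)) (𝓝 0) := by
  have hJp : adjoint (Jplus J) = Jplus J := by
    have h : adjoint J = J := hJ
    unfold Jplus
    rw [map_smulₛₗ, map_add, h, ← star_eq_adjoint, star_one, map_inv₀, map_ofNat]
  have hJm : adjoint (Jminus J) = Jminus J := by
    have h : adjoint J = J := hJ
    unfold Jminus
    rw [map_smulₛₗ, map_sub, h, ← star_eq_adjoint, star_one, map_inv₀, map_ofNat]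
  have adj_mul : ∀ A B : H →L[ℂ] H, adjoint (A * B) = adjoint B * adjoint A := fun A B =>
    adjoint_comp A B
  have hP := main_abs (G := fun z => opLog (PhiPlus H0 J K z)) hmeasp (hbdp.mono fun l h => h.1)
    (fun z hz f g => by
      have := hrepp z hz.ne' f g
      rwa [logHerg, if_pos hz] at this)
    (K * Jplus J) (fun w b => (hs_mul b K _ (hK w b)).1)
    (y0 := 2 * ‖K * Jplus J‖ ^ 2 + 1) (by positivity) Real.pi_pos.le
    (fun y hy e => by
      have hyp : 0 < y := lt_of_lt_of_le (by positivity) hy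
      have hR := resolvent_bound H0 (z := (y : ℂ) * Complex.I) (by simpa using hyp)
      have h1 := bound_aux (K * Jplus J) (H0.resolvent ((y : ℂ) * Complex.I)) hy
        (by simpa using hR) e
      have h2 : PhiPlus H0 J K ((y : ℂ) * Complex.I) = 1 + adjoint (K * Jplus J) *
          H0.resolvent ((y : ℂ) * Complex.I) * (K * Jplus J) := by
        rw [adj_mul, hJp, PhiPlus]
        simp only [mul_assoc]
      simp only [h2]
      exact h1)
  have hM := main_abs (G := fun z => -opLogAnti (PhiMinusT Hp J K z)) hmeasm
    (hbdm.mono fun l h => h.1)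
    (fun z hz f g => by
      have := hrepm z hz.ne' f g
      rw [logAntiHerg, if_pos hz] at this
      refine ⟨this.1, ?_⟩
      rw [neg_apply, inner_neg_right, this.2, neg_neg])
    (K * Jminus J) (fun w b => (hs_mul b K _ (hK w b)).1)
    (y0 := 2 * ‖K * Jminus J‖ ^ 2 + 1) (by positivity) Real.pi_pos.le
    (fun y hy e => by
      have hyp : 0 < y := lt_of_lt_of_le (by positivity) hy
      have hR := resolvent_bound Hp (z := (y : ℂ) * Complex.I) (by simpa using hyp)
      have h1 := bound_aux (K * Jminus J) (-adjoint (Hp.resolvent ((y : ℂ) * Complex.I))) hy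
        (by rw [norm_neg, ← star_eq_adjoint, norm_star]; simpa using hR) e
      have h2 : adjoint (PhiMinusT Hp J K ((y : ℂ) * Complex.I)) = 1 + adjoint (K * Jminus J) *
          (-adjoint (Hp.resolvent ((y : ℂ) * Complex.I))) * (K * Jminus J) := by
        have h3 : adjoint (1 : H →L[ℂ] H) = 1 := by rw [← star_eq_adjoint, star_one]
        rw [PhiMinusT, map_sub, h3, adj_mul, adj_mul, adj_mul, adj_mul, adj_mul, hJm,
          adjoint_adjoint, mul_neg, neg_mul, sub_eq_add_neg]
        simp only [mul_assoc]
      simp only [neg_apply, inner_neg_right, norm_neg, opLogAnti, h2]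
      rw [adjoint_inner_right, ← inner_conj_symm, RCLike.norm_conj]
      exact h1)
  filter_upwards [hP, hM] with l h1 h2
  refine ⟨h1, ?_⟩
  simpa only [imPart_neg, smul_neg, sub_neg_eq_add] using h2

end SpectralShift
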